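/- arXiv:1906.10583 — 3 statements merged into one kernel-verified Lean document; each statement's English description precedes it below -/
import Mathlib

section
/- There exists a universal constant C > 0 such that the following holds. Let h : (0,∞) → ℝ be twice continuously differentiable with h′ bounded, let x₀ ∈ ℝⁿ, let v be a unit vector, and let f(y) = h′(‖y − x₀‖)·⟨v, y − x₀⟩/‖y − x₀‖ for y ≠ x₀. Given a > 0, set L = sup_{r ≥ a} ( |h″(r)| + |h′(r)|/r ) and assume L < ∞. Then there exist functions f̃, g : ℝⁿ → ℝ such that f = f̃ + g on ℝⁿ ∖ {x₀}, f̃ is Lipschitz on ℝⁿ with Lipschitz constant at most C·L, g vanishes outside the open ball B(x₀, a), and ‖g‖_∞ ≤ 2 ‖h′‖_∞. -/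
/-!
Write `r = ‖y - x₀‖` and `φ = h'`. The Lipschitz part freezes the radial profile at radius `a`:
`ftil y = φ (max r a) / max r a * ⟪v, y - x₀⟫`, and `g` is the difference, which vanishes for
`r ≥ a` and is bounded by `|φ r| + |φ a| * r / a` for `r < a`.

With `s`, `t ≥ a` the truncated radii of two points, and `ψ s = φ s / s`,
the identity `t * (ψ s - ψ t) = (t - s) * ψ s + (φ s - φ t)` together with `|ψ| ≤ L` and the
`L`-Lipschitz continuity of `φ` on `[a, ∞)` bounds `t * |ψ s - ψ t|` by `2 * L * |s - t|`
(`radial_mul_inner_lipschitz`). Adding the contribution of the linear factor gives the Lipschitz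
constant `3 * L`.
-/

open MeasureTheory
open scoped RealInnerProductSpace

/-- Lipschitz bound for `z ↦ φ (max ‖z‖ a) / max ‖z‖ a * ⟪v, z⟫`, from the bounds
`|φ s| / s ≤ L` and the `L`-Lipschitz continuity of `φ` on `[a, ∞)`. -/
theorem radial_mul_inner_lipschitz {E : Type*} [NormedAddCommGroup E] [InnerProductSpace ℝ E]
    {φ : ℝ → ℝ} {a L : ℝ} (ha : 0 < a)
    (hφ : ∀ s, a ≤ s → |φ s| / s ≤ L)
    (hlip : ∀ s, a ≤ s → ∀ t, a ≤ t → |φ s - φ t| ≤ L * |s - t|)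
    {v : E} (hv : ‖v‖ = 1) (z w : E) :
    |φ (max ‖z‖ a) / max ‖z‖ a * ⟪v, z⟫ - φ (max ‖w‖ a) / max ‖w‖ a * ⟪v, w⟫|
      ≤ 3 * L * ‖z - w‖ := by
  have hst : |max ‖z‖ a - max ‖w‖ a| ≤ ‖z - w‖ :=
    (abs_max_sub_max_le_abs _ _ _).trans (abs_norm_sub_norm_le z w)
  have hsa : a ≤ max ‖z‖ a := le_max_right _ _
  have hta : a ≤ max ‖w‖ a := le_max_right _ _
  have hwt : ‖w‖ ≤ max ‖w‖ a := le_max_left _ _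
  generalize max ‖z‖ a = s at *
  generalize max ‖w‖ a = t at *
  have hs : 0 < s := ha.trans_le hsa
  have ht : 0 < t := ha.trans_le hta
  have hL : 0 ≤ L := (by positivity : 0 ≤ |φ s| / s).trans (hφ s hsa)
  have hψ : |φ s / s| ≤ L := by
    rw [abs_div, abs_of_pos hs]
    exact hφ s hsa
  have h1 : |⟪v, z - w⟫| ≤ ‖z - w‖ := by
    simpa [hv] using abs_real_inner_le_norm v (z - w)
  have h2 : |⟪v, w⟫| ≤ t := by
    refine le_trans ?_ hwt
    simpa [hv] using abs_real_inner_le_norm v w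
  have h3 : |φ s / s - φ t / t| * t ≤ 2 * L * ‖z - w‖ := by
    have e : |φ s / s - φ t / t| * t = |(t - s) * (φ s / s) + (φ s - φ t)| := by
      nth_rewrite 3 [← abs_of_pos ht]
      rw [← abs_mul]
      congr 1
      field_simp
      ring
    rw [e]
    calc |(t - s) * (φ s / s) + (φ s - φ t)|
        ≤ |t - s| * |φ s / s| + |φ s - φ t| := by
          rw [← abs_mul]
          exact abs_add_le _ _
      _ ≤ |t - s| * L + L * |s - t| := by
          gcongr
          exact hlip s hsa t hta
      _ = 2 * L * |s - t| := by
          rw [abs_sub_comm t s]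
          ring
      _ ≤ 2 * L * ‖z - w‖ := by gcongr
  have e : φ s / s * ⟪v, z⟫ - φ t / t * ⟪v, w⟫
      = φ s / s * ⟪v, z - w⟫ + (φ s / s - φ t / t) * ⟪v, w⟫ := by
    rw [inner_sub_right]
    ring
  rw [e]
  calc |φ s / s * ⟪v, z - w⟫ + (φ s / s - φ t / t) * ⟪v, w⟫|
      ≤ |φ s / s| * |⟪v, z - w⟫| + |φ s / s - φ t / t| * |⟪v, w⟫| := by
        rw [← abs_mul, ← abs_mul]
        exact abs_add_le _ _
    _ ≤ L * ‖z - w‖ + |φ s / s - φ t / t| * t := by gcongr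
    _ ≤ 3 * L * ‖z - w‖ := by linarith

/-- **Lemma (Kirszbraun-type decomposition): the directional derivative of the kernel map
splits as a globally Lipschitz function plus a bounded function supported in a ball.** -/
theorem directional_derivative_lipschitz_decomposition :
    ∃ C : ℝ, 0 < C ∧
      ∀ (n : ℕ) (h : ℝ → ℝ), ContDiffOn ℝ 2 h (Set.Ioi 0) →
        BddAbove ((fun r => |deriv h r|) '' Set.Ioi 0) →
      ∀ (x₀ v : EuclideanSpace ℝ (Fin n)), ‖v‖ = 1 →
      ∀ a : ℝ, 0 < a →
        BddAbove ((fun r => |deriv (deriv h) r| + |deriv h r| / r) '' Set.Ici a) →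
      ∃ ftil g : EuclideanSpace ℝ (Fin n) → ℝ,
        (∀ y : EuclideanSpace ℝ (Fin n), y ≠ x₀ →
          deriv h ‖y - x₀‖ * ⟪v, y - x₀⟫ / ‖y - x₀‖ = ftil y + g y) ∧
        LipschitzWith
          (Real.toNNReal
            (C * sSup ((fun r => |deriv (deriv h) r| + |deriv h r| / r) '' Set.Ici a)))
          ftil ∧
        (∀ y, y ∉ Metric.ball x₀ a → g y = 0) ∧
        (∀ y, |g y| ≤ 2 * sSup ((fun r => |deriv h r|) '' Set.Ioi 0)) := by
  refine ⟨3, by norm_num, fun n h hh hb x₀ v hv a ha hB => ?_⟩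
  set L := sSup ((fun r => |deriv (deriv h) r| + |deriv h r| / r) '' Set.Ici a) with hLdef
  set M := sSup ((fun r => |deriv h r|) '' Set.Ioi 0) with hMdef
  have hL : ∀ r, a ≤ r → |deriv (deriv h) r| + |deriv h r| / r ≤ L := fun r hr =>
    le_csSup hB ⟨r, hr, rfl⟩
  have hM : ∀ r, 0 < r → |deriv h r| ≤ M := fun r hr => le_csSup hb ⟨r, hr, rfl⟩
  have hM0 : 0 ≤ M := (abs_nonneg _).trans (hM a ha)
  have hφ : ∀ r, a ≤ r → |deriv h r| / r ≤ L := fun r hr =>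
    (le_add_of_nonneg_left (abs_nonneg _)).trans (hL r hr)
  have hL0 : 0 ≤ L := (by positivity : 0 ≤ |deriv h a| / a).trans (hφ a le_rfl)
  have hdiff : DifferentiableOn ℝ (deriv h) (Set.Ioi 0) :=
    (hh.deriv_of_isOpen isOpen_Ioi (m := 1) (by norm_num)).differentiableOn (by norm_num)
  have hlip : ∀ s, a ≤ s → ∀ t, a ≤ t → |deriv h s - deriv h t| ≤ L * |s - t| := by
    intro s hs t ht
    refine (convex_Ici a).norm_image_sub_le_of_norm_deriv_le (f := deriv h) ?_ ?_ ht hs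
    · intro r hr
      exact hdiff.differentiableAt (Ioi_mem_nhds (ha.trans_le hr))
    · intro r hr
      have hr0 : 0 < r := ha.trans_le hr
      exact (le_add_of_nonneg_right (by positivity)).trans (hL r hr)
  let F : EuclideanSpace ℝ (Fin n) → ℝ := fun y =>
    deriv h (max ‖y - x₀‖ a) / max ‖y - x₀‖ a * ⟪v, y - x₀⟫
  -- The value of `g` at `x₀` is immaterial for the decomposition; `0` meets the sup bound.
  let G : EuclideanSpace ℝ (Fin n) → ℝ := fun y =>
    if y = x₀ then 0 else deriv h ‖y - x₀‖ * ⟪v, y - x₀⟫ / ‖y - x₀‖ - F y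
  refine ⟨F, G, ?_, ?_, ?_, ?_⟩
  · intro y hy
    simp [G, hy]
  · refine LipschitzWith.of_dist_le_mul fun y w => ?_
    rw [Real.coe_toNNReal _ (by positivity), Real.dist_eq, dist_eq_norm]
    simpa [F] using radial_mul_inner_lipschitz ha hφ hlip hv (y - x₀) (w - x₀)
  · intro y hy
    have hy' : a ≤ ‖y - x₀‖ := by simpa [dist_eq_norm] using hy
    by_cases hyx : y = x₀
    · simp [G, hyx]
    · simp only [G, F, hyx, if_false, max_eq_left hy']
      ring
  · intro y
    by_cases hyx : y = x₀
    · simpa [G, hyx] using hM0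
    · have hr : 0 < ‖y - x₀‖ := norm_pos_iff.2 (sub_ne_zero.2 hyx)
      have hin : |⟪v, y - x₀⟫| ≤ ‖y - x₀‖ := by
        simpa [hv] using abs_real_inner_le_norm v (y - x₀)
      -- Both terms of the difference have the form `h' p * ⟪v, y - x₀⟫ / p` with `p ≥ ‖y - x₀‖`.
      have key : ∀ p, ‖y - x₀‖ ≤ p → |deriv h p * ⟪v, y - x₀⟫ / p| ≤ M := by
        intro p hp
        have hp0 : 0 < p := hr.trans_le hp
        rw [abs_div, abs_mul, abs_of_pos hp0, div_le_iff₀ hp0]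
        exact mul_le_mul (hM p hp0) (hin.trans hp) (abs_nonneg _) hM0
      have hF : F y = deriv h (max ‖y - x₀‖ a) * ⟪v, y - x₀⟫ / max ‖y - x₀‖ a := by
        simp only [F]
        ring
      simp only [G, hyx, if_false]
      rw [hF]
      refine (abs_sub _ _).trans ?_
      linarith [key _ le_rfl, key _ (le_max_left ‖y - x₀‖ a)]
end

section
/- For every constant C₀ > 0 there exist a constant C > 0 and an integer n₀ such that the following holds for all n ≥ n₀. Let μ be a probability measure on ℝⁿ with exponential 1-concentration with constant C₀, with ∫ ‖x‖² dμ(x) = n and with ‖∫ x dμ(x)‖ ≤ 1. Let T : ℝⁿ ∖ {0} → ℝⁿ be the radial projection T(x) = √n · x/‖x‖ onto the sphere of radius √n, and let μ̃ be the pushforward of μ by T (note μ({0}) = 0 is forced up to modification; assume μ({0}) = 0). Then μ̃ has exponential C-concentration with constant C, and the mean of μ̃ satisfies ‖∫ x dμ̃(x)‖ ≤ C. -/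
/-!
Write `R = √n` and `T x = R x / ‖x‖`. Applying concentration to the norm gives a median `m ≥ 0`
with `𝔼(‖x‖ - m)² ≤ 2C₀`, and since `𝔼‖x‖² = R²`, `𝔼‖x‖ ≤ R`, this forces `|m - R| ≤ √(2C₀)`
(`norm_concentration`). Hence `‖x‖` deviates from `R` by `O(1)`, exponentially well. As
`‖T x - x‖ ≤ |‖x‖ - R|`, the mean of the projected measure is within `O(1)` of the mean of `μ`.

For the concentration of a `1`-Lipschitz `f` under the projected measure, `T` is replaced by
`truncRadial R`, which equals `T` on `{‖x‖ ≥ R/2}` and is `4`-Lipschitz on all of `ℝⁿ`, so that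
concentration of `μ` applies to `f ∘ truncRadial R`. The exceptional set `{‖x‖ < R/2}` has mass
`O(e^{-R/2})`, and `f ∘ T` never deviates by more than `2R`, so that mass is at most `O(e^{-t/4})`
for every relevant deviation `t` (`radial_concentration_aux`). Finally the centre, a median of
`f ∘ truncRadial R`, is exchanged for a median of `f` under the projected measure
(`exists_median_concentration`).
-/

open MeasureTheory
open scoped ENNReal

noncomputable section

/-- A probability measure `ν` on `ℝⁿ` has exponential `σ`-concentration with constant `C₀`. -/
def ExpConc {n : ℕ} (ν : Measure (EuclideanSpace ℝ (Fin n))) (σ C₀ : ℝ) : Prop :=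
  ∀ f : EuclideanSpace ℝ (Fin n) → ℝ, LipschitzWith 1 f →
    ∃ M : ℝ, (1 / 2 : ℝ≥0∞) ≤ ν {x | f x ≤ M} ∧ (1 / 2 : ℝ≥0∞) ≤ ν {x | M ≤ f x} ∧
      ∀ ε : ℝ, 0 < ε → ν {x | ε ≤ |f x - M|} ≤ ENNReal.ofReal (C₀ * Real.exp (-ε / σ))

/-! ### Medians and exponential tails -/

open Filter Topology ProbabilityTheory Set in
/-- Every measurable real function has a median, namely the `1/2`-quantile of its law. -/
lemma exists_median {Ω : Type*} [MeasurableSpace Ω] (ν : Measure Ω) [IsProbabilityMeasure ν]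
    {f : Ω → ℝ} (hf : Measurable f) :
    ∃ M : ℝ, (1 / 2 : ℝ≥0∞) ≤ ν {x | f x ≤ M} ∧ (1 / 2 : ℝ≥0∞) ≤ ν {x | M ≤ f x} := by
  have : IsProbabilityMeasure (ν.map f) := Measure.isProbabilityMeasure_map hf.aemeasurable
  set κ := ν.map f with hκ
  set S : Set ℝ := {t | 1 / 2 ≤ cdf κ t} with hS
  have hhalf : ENNReal.ofReal (1 / 2) = (1 / 2 : ℝ≥0∞) := by
    rw [ENNReal.ofReal_div_of_pos two_pos]; simp
  have hne : S.Nonempty :=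
    ((tendsto_cdf_atTop κ).eventually (Ici_mem_nhds (by norm_num : (1 / 2 : ℝ) < 1))).exists
  have hbdd : BddBelow S := by
    obtain ⟨b, hb⟩ :=
      ((tendsto_cdf_atBot κ).eventually (Iio_mem_nhds (by norm_num : (0 : ℝ) < 1 / 2))).exists
    refine ⟨b, fun t ht => ?_⟩
    by_contra! hlt
    have h1 := monotone_cdf κ hlt.le
    have h2 : 1 / 2 ≤ cdf κ t := ht
    have h3 : cdf κ b < 1 / 2 := hb
    linarith
  refine ⟨sInf S, ?_, ?_⟩
  · have hright : Tendsto (cdf κ) (𝓝[>] (sInf S)) (𝓝 (cdf κ (sInf S))) :=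
      ((cdf κ).right_continuous (sInf S)).mono Ioi_subset_Ici_self
    have hge : 1 / 2 ≤ cdf κ (sInf S) := by
      refine ge_of_tendsto hright ?_
      filter_upwards [self_mem_nhdsWithin] with t ht
      obtain ⟨s, hs, hst⟩ := exists_lt_of_csInf_lt hne ht
      exact le_trans hs (monotone_cdf κ hst.le)
    have h := ENNReal.ofReal_le_ofReal hge
    rw [ofReal_cdf, hκ, Measure.map_apply hf measurableSet_Iic, hhalf] at h
    exact h
  · have hle : Function.leftLim (cdf κ) (sInf S) ≤ 1 / 2 := by
      refine le_of_tendsto ((monotone_cdf κ).tendsto_leftLim (sInf S)) ?_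
      filter_upwards [self_mem_nhdsWithin] with t ht
      exact (not_le.1 (fun h : 1 / 2 ≤ cdf κ t => notMem_of_lt_csInf ht hbdd h)).le
    have h := (cdf κ).measure_Ici (tendsto_cdf_atTop κ) (sInf S)
    rw [measure_cdf, hκ, Measure.map_apply hf measurableSet_Ici] at h
    change _ ≤ ν (f ⁻¹' Ici (sInf S))
    rw [h, ← hhalf]
    exact ENNReal.ofReal_le_ofReal (by linarith)

/-- Exponential concentration about an arbitrary centre `c` gives exponential concentration about
a median: every median lies within `B log (4A)` of `c`, because at that distance the tail bound
is `1/4 < 1/2`. -/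
lemma exists_median_concentration {Ω : Type*} [MeasurableSpace Ω] (ν : Measure Ω)
    [IsProbabilityMeasure ν] {f : Ω → ℝ} (hf : Measurable f) {c A B : ℝ} (hA : 1 ≤ A) (hB : 0 < B)
    (h : ∀ t : ℝ, 0 < t → ν {x | t ≤ |f x - c|} ≤ ENNReal.ofReal (A * Real.exp (-t / B))) :
    ∃ M : ℝ, (1 / 2 : ℝ≥0∞) ≤ ν {x | f x ≤ M} ∧ (1 / 2 : ℝ≥0∞) ≤ ν {x | M ≤ f x} ∧
      ∀ ε : ℝ, 0 < ε →
        ν {x | ε ≤ |f x - M|} ≤ ENNReal.ofReal (4 * A ^ 2 * Real.exp (-ε / B)) := by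
  obtain ⟨M, hM1, hM2⟩ := exists_median ν hf
  refine ⟨M, hM1, hM2, ?_⟩
  set t₀ := B * Real.log (4 * A) with ht₀
  have ht₀pos : 0 < t₀ := mul_pos hB (Real.log_pos (by linarith))
  have hexp : Real.exp (t₀ / B) = 4 * A := by
    rw [ht₀, mul_div_cancel_left₀ _ hB.ne', Real.exp_log (by linarith)]
  have hquarter : A * Real.exp (-t₀ / B) = 1 / 4 := by
    rw [neg_div, Real.exp_neg, hexp]; field_simp
  have hsmall : ν {x | t₀ ≤ |f x - c|} < 1 / 2 := by
    refine (h t₀ ht₀pos).trans_lt ?_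
    have hhalf : ENNReal.ofReal (1 / 2) = (1 / 2 : ℝ≥0∞) := by
      rw [ENNReal.ofReal_div_of_pos two_pos]; simp
    rw [hquarter, ← hhalf]
    exact (ENNReal.ofReal_lt_ofReal_iff (by norm_num)).2 (by norm_num)
  have hMc : |M - c| ≤ t₀ := by
    rw [abs_le]
    constructor
    · by_contra! hlt
      refine absurd (hM1.trans (measure_mono ?_)) (not_le.2 hsmall)
      intro x (hx : f x ≤ M)
      change t₀ ≤ |f x - c|
      exact le_trans (by linarith) (neg_le_abs _)
    · by_contra! hlt
      refine absurd (hM2.trans (measure_mono ?_)) (not_le.2 hsmall)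
      intro x (hx : M ≤ f x)
      change t₀ ≤ |f x - c|
      exact le_trans (by linarith) (le_abs_self _)
  intro ε hε
  have hshift : 4 * A ^ 2 * Real.exp (-ε / B) = A * Real.exp (-(ε - t₀) / B) := by
    have : -(ε - t₀) / B = t₀ / B + -ε / B := by ring
    rw [this, Real.exp_add, hexp]; ring
  rw [hshift]
  rcases le_or_gt ε t₀ with hle | hlt
  · refine prob_le_one.trans ?_
    rw [← ENNReal.ofReal_one]
    refine ENNReal.ofReal_le_ofReal ?_
    have : 1 ≤ Real.exp (-(ε - t₀) / B) :=
      Real.one_le_exp (div_nonneg (by linarith) hB.le)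
    nlinarith
  · refine (measure_mono ?_).trans (h (ε - t₀) (by linarith))
    intro x (hx : ε ≤ |f x - M|)
    change ε - t₀ ≤ |f x - c|
    have h1 := abs_add_le (f x - c) (c - M)
    have h2 : f x - c + (c - M) = f x - M := by ring
    rw [h2, abs_sub_comm c M] at h1
    linarith

open Set in
/-- Layer-cake bound: an exponential tail `C₀ e^{-t}` gives a second moment at most `2 C₀`. -/
lemma integral_sq_le_of_exp_tail {Ω : Type*} [MeasurableSpace Ω] (ν : Measure Ω)
    {g : Ω → ℝ} (hg : Measurable g) (hg0 : ∀ x, 0 ≤ g x) {C₀ : ℝ} (hC₀ : 0 < C₀)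
    (h : ∀ t : ℝ, 0 < t → ν {x | t ≤ g x} ≤ ENNReal.ofReal (C₀ * Real.exp (-t))) :
    ∫ x, g x ^ 2 ∂ν ≤ 2 * C₀ := by
  have hgamma : ∫⁻ t in Ioi (0 : ℝ), ENNReal.ofReal (Real.exp (-t) * t ^ ((2 : ℝ) - 1)) = 1 := by
    rw [← ofReal_integral_eq_lintegral_ofReal (Real.GammaIntegral_convergent two_pos),
      ← Real.Gamma_eq_integral two_pos, Real.Gamma_two, ENNReal.ofReal_one]
    filter_upwards [ae_restrict_mem measurableSet_Ioi] with t ht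
    have : (0 : ℝ) < t := ht
    positivity
  have hcake := lintegral_rpow_eq_lintegral_meas_le_mul ν (Filter.Eventually.of_forall hg0)
    hg.aemeasurable two_pos
  have hbound : ∫⁻ t in Ioi (0 : ℝ), ν {a | t ≤ g a} * ENNReal.ofReal (t ^ ((2 : ℝ) - 1))
      ≤ ENNReal.ofReal C₀ := by
    calc _ ≤ ∫⁻ t in Ioi (0 : ℝ), ENNReal.ofReal C₀ *
          ENNReal.ofReal (Real.exp (-t) * t ^ ((2 : ℝ) - 1)) := by
          refine setLIntegral_mono' measurableSet_Ioi fun t ht => ?_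
          refine (mul_le_mul_left (h t ht) _).trans (le_of_eq ?_)
          rw [ENNReal.ofReal_mul hC₀.le, ENNReal.ofReal_mul (Real.exp_pos _).le, mul_assoc]
      _ = ENNReal.ofReal C₀ := by
          rw [lintegral_const_mul' _ _ ENNReal.ofReal_ne_top, hgamma, mul_one]
  rw [integral_eq_lintegral_of_nonneg_ae (Filter.Eventually.of_forall fun x => sq_nonneg _)
    (hg.pow_const 2).aestronglyMeasurable]
  refine ENNReal.toReal_le_of_le_ofReal (by linarith) ?_
  simp only [Real.rpow_two] at hcake
  rw [hcake, ENNReal.ofReal_mul zero_le_two]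
  gcongr

/-! ### The truncated radial map -/

/-- The truncated radial map `x ↦ R x / max (‖x‖, R/2)`, which agrees with the radial projection
onto the sphere of radius `R` outside the ball of radius `R/2`. -/
def truncRadial {E : Type*} [NormedAddCommGroup E] [NormedSpace ℝ E] (R : ℝ) (x : E) : E :=
  (R / max ‖x‖ (R / 2)) • x

section TruncRadial

variable {E : Type*} [NormedAddCommGroup E] [NormedSpace ℝ E] {R : ℝ}

lemma norm_truncRadial_le (hR : 0 < R) (x : E) : ‖truncRadial R x‖ ≤ R := by
  have hm : 0 < max ‖x‖ (R / 2) := lt_max_of_lt_right (by linarith)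
  rw [truncRadial, norm_smul, Real.norm_of_nonneg (by positivity), div_mul_eq_mul_div,
    div_le_iff₀ hm]
  exact mul_le_mul_of_nonneg_left (le_max_left _ _) hR.le

lemma norm_truncRadial_sub_le (hR : 0 < R) (x y : E) :
    ‖truncRadial R x - truncRadial R y‖ ≤ 4 * ‖x - y‖ := by
  set p := max ‖x‖ (R / 2) with hp
  set q := max ‖y‖ (R / 2) with hq
  have hp0 : 0 < p := lt_max_of_lt_right (by linarith)
  have hq0 : 0 < q := lt_max_of_lt_right (by linarith)
  have hpR : R ≤ 2 * p := by linarith [le_max_right ‖x‖ (R / 2)]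
  have hyq : ‖y‖ ≤ q := le_max_left _ _
  have hpq : |q - p| ≤ ‖x - y‖ :=
    (abs_max_sub_max_le_abs ‖y‖ ‖x‖ (R / 2)).trans
      ((abs_norm_sub_norm_le y x).trans_eq (norm_sub_rev y x))
  have hdecomp : truncRadial R x - truncRadial R y
      = (R / p) • (x - y) + ((R / p) * ((q - p) / q)) • y := by
    have : (R / p) * ((q - p) / q) = R / p - R / q := by field_simp
    rw [this, truncRadial, truncRadial, ← hp, ← hq]
    module
  have hRp0 : 0 ≤ R / p := by positivity
  have hRp : R / p ≤ 2 := by rw [div_le_iff₀ hp0]; exact hpR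
  have h2 : |q - p| / q * ‖y‖ ≤ ‖x - y‖ := by
    rw [div_mul_eq_mul_div, div_le_iff₀ hq0]
    exact mul_le_mul hpq hyq (norm_nonneg _) (norm_nonneg _)
  rw [hdecomp]
  refine (norm_add_le _ _).trans ?_
  rw [norm_smul, norm_smul, Real.norm_eq_abs, Real.norm_eq_abs, abs_mul, abs_of_nonneg hRp0,
    abs_div, abs_of_pos hq0]
  calc R / p * ‖x - y‖ + R / p * (|q - p| / q) * ‖y‖
      = R / p * (‖x - y‖ + |q - p| / q * ‖y‖) := by ring
    _ ≤ 2 * (‖x - y‖ + ‖x - y‖) := by gcongr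
    _ = 4 * ‖x - y‖ := by ring

lemma truncRadial_eq {x : E} (hx : R / 2 ≤ ‖x‖) : truncRadial R x = (R / ‖x‖) • x := by
  rw [truncRadial, max_eq_left hx]

lemma norm_radial_le (hR : 0 ≤ R) (x : E) : ‖(R / ‖x‖) • x‖ ≤ R := by
  rw [norm_smul, norm_div, norm_norm, Real.norm_of_nonneg hR]
  rcases (norm_nonneg x).eq_or_lt with h | h
  · rw [← h]; simpa using hR
  · rw [div_mul_cancel₀ _ h.ne']

lemma norm_radial_sub_le (x : E) : ‖(R / ‖x‖) • x - x‖ ≤ |‖x‖ - R| := by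
  rcases eq_or_ne x 0 with rfl | hx
  · simp
  · have hx' : ‖x‖ ≠ 0 := norm_ne_zero_iff.2 hx
    have : (R / ‖x‖) • x - x = ((R - ‖x‖) / ‖x‖) • x := by
      rw [sub_div, div_self hx', sub_smul, one_smul]
    rw [this, norm_smul, norm_div, norm_norm, div_mul_cancel₀ _ hx', Real.norm_eq_abs,
      abs_sub_comm]

end TruncRadial

/-! ### Concentration of the norm and of the projected measure -/

/-- The norm of a concentrated vector with `𝔼‖x‖² = R²` is concentrated about `R`: its median `m`
satisfies `(m - R)² ≤ 𝔼(‖x‖ - m)²` because `m ≥ 0` and `𝔼‖x‖ ≤ R`. -/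
lemma norm_concentration {n : ℕ} {μ : Measure (EuclideanSpace ℝ (Fin n))} [IsProbabilityMeasure μ]
    {C₀ R : ℝ} (hC₀ : 0 < C₀) (hR : 0 < R) (hμ : ExpConc μ 1 C₀)
    (hint : Integrable (fun x => ‖x‖ ^ 2) μ) (hsq : ∫ x, ‖x‖ ^ 2 ∂μ = R ^ 2) :
    (∀ t : ℝ, 0 < t → μ {x | ‖x‖ < R - Real.sqrt (2 * C₀) - t}
        ≤ ENNReal.ofReal (C₀ * Real.exp (-t))) ∧
      Integrable (fun x => ‖x‖) μ ∧
      ∫ x, |‖x‖ - R| ∂μ ≤ (1 + 2 * C₀) / 2 + Real.sqrt (2 * C₀) := by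
  obtain ⟨m, hm1, -, hm⟩ := hμ (fun x => ‖x‖) lipschitzWith_one_norm
  simp only [div_one] at hm
  have hm0 : 0 ≤ m := by
    have hne : μ {x | ‖x‖ ≤ m} ≠ 0 := fun h0 => by simp [h0] at hm1
    obtain ⟨x, hx⟩ := nonempty_of_measure_ne_zero hne
    exact (norm_nonneg x).trans hx
  have hV : ∫ x, |‖x‖ - m| ^ 2 ∂μ ≤ 2 * C₀ :=
    integral_sq_le_of_exp_tail μ (by fun_prop) (fun x => abs_nonneg _) hC₀ hm
  have hnorm : Integrable (fun x => ‖x‖) μ := by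
    refine ((integrable_const (1 : ℝ)).add hint).mono' (by fun_prop)
      (Filter.Eventually.of_forall fun x => ?_)
    simp only [norm_norm, Pi.add_apply]
    nlinarith [sq_nonneg (‖x‖ - 1), norm_nonneg x]
  have hexpand : ∀ a : ℝ, ∫ x, |‖x‖ - a| ^ 2 ∂μ = R ^ 2 - 2 * a * (∫ x, ‖x‖ ∂μ) + a ^ 2 := by
    intro a
    have : ∀ x : EuclideanSpace ℝ (Fin n),
        |‖x‖ - a| ^ 2 = ‖x‖ ^ 2 - 2 * a * ‖x‖ + a ^ 2 := fun x => by rw [sq_abs]; ring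
    simp_rw [this]
    have hI : Integrable (fun x => ‖x‖ ^ 2 - 2 * a * ‖x‖) μ := hint.sub (hnorm.const_mul _)
    rw [integral_add hI (integrable_const _), integral_sub hint (hnorm.const_mul _), integral_const_mul, hsq]
    simp
  have hER : ∫ x, ‖x‖ ∂μ ≤ R := by
    have h0 : 0 ≤ ∫ x, |‖x‖ - R| ^ 2 ∂μ := integral_nonneg fun x => sq_nonneg _
    rw [hexpand R] at h0
    nlinarith
  have hmR : |m - R| ≤ Real.sqrt (2 * C₀) := by
    refine Real.abs_le_sqrt ?_
    rw [hexpand m] at hV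
    nlinarith [mul_le_mul_of_nonneg_left hER hm0]
  refine ⟨fun t ht => (measure_mono ?_).trans (hm t ht), hnorm, ?_⟩
  · intro x (hx : ‖x‖ < R - Real.sqrt (2 * C₀) - t)
    change t ≤ |‖x‖ - m|
    refine le_trans ?_ (neg_le_abs _)
    linarith [(abs_le.1 hmR).1]
  · have hsqint : Integrable (fun x => |‖x‖ - m| ^ 2) μ := by
      have := (hint.sub (hnorm.const_mul (2 * m))).add (integrable_const (m ^ 2))
      refine this.congr (Filter.Eventually.of_forall fun x => ?_)
      simp only [Pi.add_apply, Pi.sub_apply, sq_abs]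
      ring
    have hJ : Integrable (fun x => (1 + |‖x‖ - m| ^ 2) / 2) μ :=
      ((integrable_const (1 : ℝ)).add hsqint).div_const 2
    have hI : Integrable (fun x => (1 + |‖x‖ - m| ^ 2) / 2 + Real.sqrt (2 * C₀)) μ :=
      hJ.add (integrable_const _)
    calc ∫ x, |‖x‖ - R| ∂μ ≤ ∫ x, ((1 + |‖x‖ - m| ^ 2) / 2 + Real.sqrt (2 * C₀)) ∂μ := by
          refine integral_mono (hnorm.sub (integrable_const R)).abs hI fun x => ?_
          have h1 := abs_sub_le ‖x‖ m R
          change |‖x‖ - R| ≤ (1 + |‖x‖ - m| ^ 2) / 2 + Real.sqrt (2 * C₀)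
          nlinarith [sq_nonneg (|‖x‖ - m| - 1)]
      _ = (1 + ∫ x, |‖x‖ - m| ^ 2 ∂μ) / 2 + Real.sqrt (2 * C₀) := by
          rw [integral_add hJ (integrable_const _), integral_div,
            integral_add (integrable_const _) hsqint]
          simp
      _ ≤ _ := by linarith

/-- Concentration of `f ∘ T` about a median of the `4`-Lipschitz function `f ∘ truncRadial R`.
The two functions differ only on `{‖x‖ < R/2}`, which has mass `O(e^{-R/2})`; this is absorbed in
the tail bound since deviations `t > 2R` do not occur. -/
lemma radial_concentration_aux {n : ℕ} {μ : Measure (EuclideanSpace ℝ (Fin n))}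
    [IsProbabilityMeasure μ] {C₀ R s : ℝ} (hC₀ : 0 < C₀) (hR : 0 < R) (hμ : ExpConc μ 1 C₀)
    (htail : ∀ t : ℝ, 0 < t → μ {x | ‖x‖ < R - s - t} ≤ ENNReal.ofReal (C₀ * Real.exp (-t)))
    {f : EuclideanSpace ℝ (Fin n) → ℝ} (hf : LipschitzWith 1 f) :
    ∃ c : ℝ, ∀ t : ℝ, 0 < t → μ {x | t ≤ |f ((R / ‖x‖) • x) - c|}
      ≤ ENNReal.ofReal ((C₀ + 1) * (1 + Real.exp s) * Real.exp (-t / 4)) := by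
  have hfd : ∀ x y, |f x - f y| ≤ ‖x - y‖ := fun x y => by
    simpa [Real.dist_eq, dist_eq_norm] using hf.dist_le_mul x y
  have hlip : LipschitzWith 1 (fun x => f (truncRadial R x) / 4) := by
    refine LipschitzWith.of_dist_le_mul fun x y => ?_
    rw [Real.dist_eq, dist_eq_norm, ← sub_div, abs_div, abs_of_pos (by norm_num : (0 : ℝ) < 4)]
    have h1 := hfd (truncRadial R x) (truncRadial R y)
    have h2 := norm_truncRadial_sub_le hR x y
    simp only [NNReal.coe_one, one_mul]
    linarith
  obtain ⟨M, hM1, hM2, hM⟩ := hμ _ hlip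
  simp only [div_one] at hM
  have hball : ∀ y : EuclideanSpace ℝ (Fin n), ‖y‖ ≤ R → |f y - f 0| ≤ R := fun y hy =>
    (hfd y 0).trans (by simpa using hy)
  -- A median lies in the range of values, and `f` stays within `R` of `f 0` on the `R`-ball.
  have hMR : |f 0 - 4 * M| ≤ R := by
    have hne1 : μ {x | f (truncRadial R x) / 4 ≤ M} ≠ 0 := fun h0 => by simp [h0] at hM1
    have hne2 : μ {x | M ≤ f (truncRadial R x) / 4} ≠ 0 := fun h0 => by simp [h0] at hM2
    obtain ⟨x, hx : f (truncRadial R x) / 4 ≤ M⟩ := nonempty_of_measure_ne_zero hne1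
    obtain ⟨y, hy : M ≤ f (truncRadial R y) / 4⟩ := nonempty_of_measure_ne_zero hne2
    have h1 := abs_le.1 (hball _ (norm_truncRadial_le hR x))
    have h2 := abs_le.1 (hball _ (norm_truncRadial_le hR y))
    rw [abs_le]
    constructor <;> linarith
  have hbad : μ {x | ‖x‖ < R / 2} ≤ ENNReal.ofReal ((C₀ + 1) * Real.exp (s - R / 2)) := by
    rcases le_or_gt (R / 2) s with hs | hs
    · refine prob_le_one.trans ?_
      rw [← ENNReal.ofReal_one]
      refine ENNReal.ofReal_le_ofReal ?_
      have : 1 ≤ Real.exp (s - R / 2) := Real.one_le_exp (by linarith)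
      nlinarith
    · have h1 := htail (R / 2 - s) (by linarith)
      have h2 : R - s - (R / 2 - s) = R / 2 := by ring
      rw [h2, neg_sub] at h1
      refine h1.trans (ENNReal.ofReal_le_ofReal ?_)
      have := Real.exp_pos (s - R / 2)
      nlinarith
  refine ⟨4 * M, fun t ht => ?_⟩
  rcases le_or_gt t (2 * R) with htR | htR
  · have hsub : {x | t ≤ |f ((R / ‖x‖) • x) - 4 * M|}
        ⊆ {x | t / 4 ≤ |f (truncRadial R x) / 4 - M|} ∪ {x | ‖x‖ < R / 2} := by
      intro x (hx : t ≤ |f ((R / ‖x‖) • x) - 4 * M|)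
      rcases lt_or_ge ‖x‖ (R / 2) with hlt | hge
      · exact Or.inr hlt
      · left
        change t / 4 ≤ |f (truncRadial R x) / 4 - M|
        have : f (truncRadial R x) / 4 - M = (f ((R / ‖x‖) • x) - 4 * M) / 4 := by
          rw [truncRadial_eq hge]; ring
        rw [this, abs_div, abs_of_pos (by norm_num : (0 : ℝ) < 4)]
        linarith
    refine (measure_mono hsub).trans ((measure_union_le _ _).trans
      ((add_le_add (hM (t / 4) (by linarith)) hbad).trans ?_))
    rw [← ENNReal.ofReal_add (by positivity) (by positivity)]
    refine ENNReal.ofReal_le_ofReal ?_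
    have h1 : Real.exp (s - R / 2) ≤ Real.exp s * Real.exp (-t / 4) := by
      rw [← Real.exp_add]
      exact Real.exp_le_exp.2 (by linarith)
    have h2 : Real.exp (-(t / 4)) = Real.exp (-t / 4) := by rw [neg_div]
    rw [h2]
    have h3 := Real.exp_pos (-t / 4)
    have h4 := mul_le_mul_of_nonneg_left h1 (by linarith : 0 ≤ C₀ + 1)
    nlinarith
  · have hempty : {x : EuclideanSpace ℝ (Fin n) | t ≤ |f ((R / ‖x‖) • x) - 4 * M|} = ∅ := by
      refine Set.eq_empty_of_forall_notMem fun x (hx : t ≤ |f ((R / ‖x‖) • x) - 4 * M|) => ?_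
      have h1 := hball _ (norm_radial_le hR.le x)
      have h2 := abs_sub_le (f ((R / ‖x‖) • x)) (f 0) (4 * M)
      linarith
    rw [hempty, measure_empty]
    exact zero_le

/-- **Lemma 9: the radial projection onto the sphere of radius `√n` of a concentrated
measure with variance `n` and mean `O(1)` is concentrated with mean `O(1)`.** -/
theorem radial_projection_concentration
    (C₀ : ℝ) (hC₀ : 0 < C₀) :
    ∃ (C : ℝ) (n₀ : ℕ), 0 < C ∧
      ∀ n : ℕ, n₀ ≤ n →
      ∀ μ : Measure (EuclideanSpace ℝ (Fin n)), IsProbabilityMeasure μ →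
        ExpConc μ 1 C₀ →
        (∫ x, ‖x‖ ^ 2 ∂μ) = n →
        ‖∫ x, x ∂μ‖ ≤ 1 →
        μ {0} = 0 →
        ExpConc (Measure.map (fun x => (Real.sqrt n / ‖x‖) • x) μ) C C ∧
        ‖∫ x, x ∂(Measure.map (fun x => (Real.sqrt n / ‖x‖) • x) μ)‖ ≤ C := by
  set s := Real.sqrt (2 * C₀) with hs
  set A := (C₀ + 1) * (1 + Real.exp s) with hA
  have hs0 : 0 ≤ s := Real.sqrt_nonneg _
  have hA1 : 1 ≤ A := by
    have := Real.exp_pos s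
    nlinarith
  -- `4 * A ^ 2` and `4` are the constants of the concentration, the rest bounds the mean.
  refine ⟨4 * A ^ 2 + 4 + (1 + ((1 + 2 * C₀) / 2 + s)), 1, by positivity, ?_⟩
  set C := 4 * A ^ 2 + 4 + (1 + ((1 + 2 * C₀) / 2 + s)) with hC
  intro n hn μ hprob hμ hsq hmean _
  have hn0 : (0 : ℝ) < n := by exact_mod_cast hn
  set R := Real.sqrt n with hRdef
  have hR : 0 < R := Real.sqrt_pos.2 hn0
  have hR2 : R ^ 2 = n := Real.sq_sqrt hn0.le
  -- A nonzero Bochner integral forces integrability.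
  have hint : Integrable (fun x => ‖x‖ ^ 2) μ := by
    by_contra hni
    rw [integral_undef hni] at hsq
    exact hn0.ne hsq
  obtain ⟨htail, hnorm, hdev⟩ := norm_concentration hC₀ hR hμ hint (hsq.trans hR2.symm)
  have hT : Measurable (fun x : EuclideanSpace ℝ (Fin n) => (R / ‖x‖) • x) := by fun_prop
  have hprobT : IsProbabilityMeasure (μ.map fun x => (R / ‖x‖) • x) :=
    Measure.isProbabilityMeasure_map hT.aemeasurable
  constructor
  · intro f hf
    obtain ⟨c, hc⟩ := radial_concentration_aux hC₀ hR hμ htail hf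
    have hfm : Measurable f := hf.continuous.measurable
    obtain ⟨M, hM1, hM2, hM⟩ := exists_median_concentration (μ.map fun x => (R / ‖x‖) • x) hfm
      (c := c) hA1 (by norm_num : (0 : ℝ) < 4) fun t ht => by
        rw [Measure.map_apply hT (measurableSet_le measurable_const (by fun_prop))]
        exact hc t ht
    refine ⟨M, hM1, hM2, fun ε hε => (hM ε hε).trans (ENNReal.ofReal_le_ofReal ?_)⟩
    have hC4 : 4 ≤ C := by rw [hC]; nlinarith
    have hexp : Real.exp (-ε / 4) ≤ Real.exp (-ε / C) := by
      refine Real.exp_le_exp.2 ?_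
      rw [neg_div, neg_div, neg_le_neg_iff]
      exact div_le_div_of_nonneg_left hε.le (by norm_num) hC4
    have hAC : 4 * A ^ 2 ≤ C := by rw [hC]; linarith
    exact mul_le_mul hAC hexp (Real.exp_pos _).le (by linarith)
  · rw [integral_map hT.aemeasurable (f := fun x => x) aestronglyMeasurable_id]
    have hidint : Integrable (fun x : EuclideanSpace ℝ (Fin n) => x) μ :=
      (integrable_norm_iff aestronglyMeasurable_id).1 hnorm
    have hdevint : Integrable (fun x : EuclideanSpace ℝ (Fin n) => |‖x‖ - R|) μ :=
      (hnorm.sub (integrable_const R)).abs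
    have hdiff : Integrable (fun x : EuclideanSpace ℝ (Fin n) => (R / ‖x‖) • x - x) μ :=
      hdevint.mono' (hT.sub measurable_id).aestronglyMeasurable
        (Filter.Eventually.of_forall norm_radial_sub_le)
    have hsplit : ∫ x, (R / ‖x‖) • x ∂μ = ∫ x, x ∂μ + ∫ x, ((R / ‖x‖) • x - x) ∂μ := by
      rw [← integral_add hidint hdiff]
      simp
    have hdiffle : ‖∫ x, ((R / ‖x‖) • x - x) ∂μ‖ ≤ (1 + 2 * C₀) / 2 + s :=
      (norm_integral_le_of_norm_le hdevint
        (Filter.Eventually.of_forall norm_radial_sub_le)).trans hdev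
    rw [hsplit]
    refine (norm_add_le _ _).trans ?_
    rw [hC]
    nlinarith [sq_nonneg A]

end
end

section
/- For every constant C₀ > 0 there exist constants c₁, c₂ > 0 such that the following holds. Let μ₁ and μ₂ be probability measures on ℝⁿ, each with exponential 1-concentration with constant C₀, with means of Euclidean norm at most 1, and with non-centered covariance matrices Σᵢ = ∫ x xᵀ dμᵢ(x) satisfying trace Σᵢ ≤ n. For t > 0 let G be the symmetric 2×2 matrix with entries G(i,j) = ∫∫ cos( (t/√n) ⟨x, y⟩ ) dμᵢ(x) dμⱼ(y). If 0 < t ≤ c₁ ‖Σ₁ − Σ₂‖_F / √n, then the smallest singular value of G is at least c₂ t² ‖Σ₁ − Σ₂‖_F² / n. -/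
/-!
Write `s = t / √n`, `A i j = ∫∫ ⟪x, y⟫²` and `B i j = ∫∫ ⟪x, y⟫⁴`, the integrals being over
`μᵢ ⊗ μⱼ`. Expanding the square shows `A i j = ⟨Σᵢ, Σⱼ⟩`, so
`‖Σ₁ - Σ₂‖_F² = A 1 1 - 2 A 1 2 + A 2 2` (`frobNorm_sub_sq`).

Concentration gives `B i j ≤ K n²` for a constant `K` depending only on `C₀`. Indeed a 1-Lipschitz
function is within a bounded `L⁴` distance of its median (`ExpConc.exists_moment_four`). For a
linear functional of norm one the median is bounded because the mean is
(`ExpConc.integral_inner_pow_four_le`), and for the norm it is at most `√(2n)` by the trace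
assumption (`ExpConc.integral_norm_pow_four_le`); integrating in `x` and then in `y` gives the claim.
In particular `A i j ≤ n (1 + K) / 2`.

The elementary bounds `1 - u² / 2 ≤ cos u ≤ 1 - u² / 2 + u⁴ / 2` then give
`G 1 1 + G 2 2 - 2 G 1 2 ≤ -(s² / 2) ‖Σ₁ - Σ₂‖_F² + s⁴ K n²`, and for
`t ≤ c₁ ‖Σ₁ - Σ₂‖_F / √n` the quartic term is absorbed. Hence `G 1 2` exceeds the average of the
diagonal entries, which are at least `1 / 2`, by a multiple of `t² ‖Σ₁ - Σ₂‖_F² / n`. So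
`-det G` is at least such a multiple as well, and since the entries of `G` are at most one in
absolute value, the adjugate formula turns this into the bound on the smallest singular value.
-/

open MeasureTheory
open scoped ENNReal RealInnerProductSpace

noncomputable section

/-- The non-centered covariance matrix of a measure on `ℝⁿ`. -/
def covMat {n : ℕ} (ν : Measure (EuclideanSpace ℝ (Fin n))) : Matrix (Fin n) (Fin n) ℝ :=
  Matrix.of fun i j => ∫ x, x i * x j ∂ν

/-- The Frobenius norm of a matrix. -/
def frobNorm {n : ℕ} (M : Matrix (Fin n) (Fin n) ℝ) : ℝ :=
  Real.sqrt (∑ i, ∑ j, (M i j) ^ 2)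

/-! ### Moments of measures with exponential concentration -/

theorem continuous_integrable_of_le {α : Type*} [TopologicalSpace α] [MeasurableSpace α]
    [OpensMeasurableSpace α] {ν : Measure α} {f g : α → ℝ} (hg : Integrable g ν)
    (hf : Continuous f) (h : ∀ x, |f x| ≤ g x) : Integrable f ν :=
  hg.mono' hf.measurable.aestronglyMeasurable (Filter.Eventually.of_forall fun x => by
    simpa using h x)

/-- Layer-cake: a function with tail `C₀ e^{-ε}` has fourth moment at most `Γ(5) C₀ = 24 C₀`. -/
theorem moment_four_of_tail {α : Type*} [MeasurableSpace α] (ν : Measure α) {g : α → ℝ}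
    (hg : Measurable g) {C₀ : ℝ} (hC₀ : 0 < C₀)
    (h : ∀ ε : ℝ, 0 < ε → ν {x | ε ≤ |g x|} ≤ ENNReal.ofReal (C₀ * Real.exp (-ε))) :
    Integrable (fun x => g x ^ 4) ν ∧ ∫ x, g x ^ 4 ∂ν ≤ 24 * C₀ := by
  have hpow : ∀ x, |g x| ^ (4 : ℝ) = g x ^ 4 := by
    intro x
    rw [show (4 : ℝ) = ((4 : ℕ) : ℝ) by norm_num, Real.rpow_natCast]
    exact Even.pow_abs (by decide) _
  have hlc := lintegral_rpow_eq_lintegral_meas_le_mul ν (f := fun x => |g x|)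
    (Filter.Eventually.of_forall fun x => abs_nonneg _) (by fun_prop) (p := 4) (by norm_num)
  have hint : IntegrableOn (fun x : ℝ => C₀ * (Real.exp (-x) * x ^ ((4 : ℝ) - 1))) (Set.Ioi 0) :=
    (Real.GammaIntegral_convergent (s := 4) (by norm_num)).const_mul C₀
  have hgam : ∫ x in Set.Ioi (0 : ℝ), C₀ * (Real.exp (-x) * x ^ ((4 : ℝ) - 1)) = 6 * C₀ := by
    rw [integral_const_mul, ← Real.Gamma_eq_integral (by norm_num),
      show (4 : ℝ) = ((3 : ℕ) : ℝ) + 1 by norm_num, Real.Gamma_nat_eq_factorial]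
    norm_num [Nat.factorial]; ring
  have hbound : ∫⁻ t in Set.Ioi (0 : ℝ), ν {a | t ≤ |g a|} * ENNReal.ofReal (t ^ ((4 : ℝ) - 1))
      ≤ ENNReal.ofReal (6 * C₀) := by
    rw [← hgam, ofReal_integral_eq_lintegral_ofReal hint]
    · refine setLIntegral_mono_ae' measurableSet_Ioi (Filter.Eventually.of_forall fun t ht => ?_)
      calc _ ≤ ENNReal.ofReal (C₀ * Real.exp (-t)) * ENNReal.ofReal (t ^ ((4 : ℝ) - 1)) := by
            gcongr; exact h t ht
        _ = _ := by
            rw [← ENNReal.ofReal_mul (by positivity), mul_assoc]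
    · refine (ae_restrict_iff' measurableSet_Ioi).2 (Filter.Eventually.of_forall fun t ht => ?_)
      have : (0 : ℝ) < t := ht
      simp only [Pi.zero_apply]
      positivity
  have hfin : ∫⁻ x, ENNReal.ofReal (g x ^ 4) ∂ν ≤ ENNReal.ofReal (24 * C₀) := by
    simp only [hpow] at hlc
    rw [hlc, show 24 * C₀ = 4 * (6 * C₀) by ring, ENNReal.ofReal_mul (by norm_num)]
    gcongr
  have hnn : ∀ x, 0 ≤ g x ^ 4 := fun x => by positivity
  refine ⟨⟨(by fun_prop), ?_⟩, ?_⟩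
  · rw [hasFiniteIntegral_iff_ofReal (Filter.Eventually.of_forall hnn)]
    exact hfin.trans_lt ENNReal.ofReal_lt_top
  · rw [integral_eq_lintegral_of_nonneg_ae (Filter.Eventually.of_forall hnn) (by fun_prop)]
    exact ENNReal.toReal_le_of_le_ofReal (by positivity) hfin

section Moments

variable {n : ℕ} {ν : Measure (EuclideanSpace ℝ (Fin n))} {C₀ : ℝ}

theorem ExpConc.exists_moment_four (h : ExpConc ν 1 C₀) (hC₀ : 0 < C₀)
    {f : EuclideanSpace ℝ (Fin n) → ℝ} (hf : LipschitzWith 1 f) :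
    ∃ M : ℝ, (1 / 2 : ℝ≥0∞) ≤ ν {x | f x ≤ M} ∧ (1 / 2 : ℝ≥0∞) ≤ ν {x | M ≤ f x} ∧
      Integrable (fun x => (f x - M) ^ 4) ν ∧ ∫ x, (f x - M) ^ 4 ∂ν ≤ 24 * C₀ := by
  obtain ⟨M, h1, h2, h3⟩ := h f hf
  refine ⟨M, h1, h2, moment_four_of_tail ν (g := fun x => f x - M)
    (hf.continuous.measurable.sub_const M) hC₀ fun ε hε => ?_⟩
  simpa using h3 ε hε

theorem pow_four_le_sub_add (a M : ℝ) : a ^ 4 ≤ 8 * ((a - M) ^ 4 + M ^ 4) := by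
  have h1 : a ^ 2 ≤ 2 * ((a - M) ^ 2 + M ^ 2) := by nlinarith [sq_nonneg (a - M - M)]
  have h2 : (a ^ 2) ^ 2 ≤ (2 * ((a - M) ^ 2 + M ^ 2)) ^ 2 := by gcongr
  nlinarith [sq_nonneg ((a - M) ^ 2 - M ^ 2)]

variable [IsProbabilityMeasure ν]

/-- A fourth-moment bound around `M` is turned into one around the origin. -/
theorem integral_pow_four_le_of_sub {f : EuclideanSpace ℝ (Fin n) → ℝ} (hf : Continuous f) {M D : ℝ}
    (hi : Integrable (fun x => (f x - M) ^ 4) ν) (hD : ∫ x, (f x - M) ^ 4 ∂ν ≤ D) :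
    Integrable (fun x => f x ^ 4) ν ∧ ∫ x, f x ^ 4 ∂ν ≤ 8 * (D + M ^ 4) := by
  have hi' : Integrable (fun x => 8 * ((f x - M) ^ 4 + M ^ 4)) ν :=
    (hi.add (integrable_const _)).const_mul 8
  have hi4 : Integrable (fun x => f x ^ 4) ν :=
    continuous_integrable_of_le hi' (by fun_prop) fun x => by
      rw [abs_of_nonneg (by positivity)]; exact pow_four_le_sub_add _ _
  refine ⟨hi4, (integral_mono hi4 hi' fun x => pow_four_le_sub_add _ _).trans ?_⟩
  rw [integral_const_mul, integral_add hi (integrable_const _)]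
  simp only [integral_const, probReal_univ, one_smul]
  linarith

theorem ExpConc.integrable_norm_pow_four (h : ExpConc ν 1 C₀) (hC₀ : 0 < C₀) :
    Integrable (fun x => ‖x‖ ^ 4) ν := by
  obtain ⟨M, -, -, hi, hD⟩ := h.exists_moment_four hC₀ lipschitzWith_one_norm
  exact (integral_pow_four_le_of_sub continuous_norm hi hD).1

theorem integrable_norm_sq (h : Integrable (fun x => ‖x‖ ^ 4) ν) :
    Integrable (fun x => ‖x‖ ^ 2) ν :=
  continuous_integrable_of_le ((integrable_const 1).add h) (by fun_prop) fun x => by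
    rw [abs_of_nonneg (by positivity)]
    simp only [Pi.add_apply]
    nlinarith [sq_nonneg (‖x‖ ^ 2 - 1)]

theorem integrable_self (h : Integrable (fun x => ‖x‖ ^ 4) ν) :
    Integrable (fun x : EuclideanSpace ℝ (Fin n) => x) ν := by
  refine ((integrable_const 1).add (integrable_norm_sq h)).mono'
    continuous_id.measurable.aestronglyMeasurable (Filter.Eventually.of_forall fun x => ?_)
  simp only [Pi.add_apply]
  nlinarith [sq_nonneg (‖x‖ - 1)]

theorem integrable_coord_mul (h : Integrable (fun x => ‖x‖ ^ 4) ν) (i j : Fin n) :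
    Integrable (fun x : EuclideanSpace ℝ (Fin n) => x i * x j) ν :=
  continuous_integrable_of_le (integrable_norm_sq h) (by fun_prop) fun x => by
    rw [abs_mul, sq]
    have hi := PiLp.norm_apply_le x i
    have hj := PiLp.norm_apply_le x j
    rw [Real.norm_eq_abs] at hi hj
    gcongr

theorem trace_covMat (h : Integrable (fun x => ‖x‖ ^ 4) ν) :
    Matrix.trace (covMat ν) = ∫ x, ‖x‖ ^ 2 ∂ν := by
  simp only [Matrix.trace, Matrix.diag, covMat, Matrix.of_apply, EuclideanSpace.norm_sq_eq,
    Real.norm_eq_abs, sq_abs]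
  rw [integral_finsetSum _ fun i _ => by simpa [sq] using integrable_coord_mul h i i]
  simp only [sq]

theorem ExpConc.integral_norm_pow_four_le (h : ExpConc ν 1 C₀) (hC₀ : 0 < C₀) (hn : 1 ≤ n)
    (htr : Matrix.trace (covMat ν) ≤ n) :
    ∫ x, ‖x‖ ^ 4 ∂ν ≤ (192 * C₀ + 32) * (n : ℝ) ^ 2 := by
  have hi4 := h.integrable_norm_pow_four hC₀
  rw [trace_covMat hi4] at htr
  obtain ⟨M, hM1, hM2, hi, hD⟩ := h.exists_moment_four hC₀ lipschitzWith_one_norm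
  have hM0 : 0 ≤ M := by
    by_contra! hneg
    have : {x : EuclideanSpace ℝ (Fin n) | ‖x‖ ≤ M} = ∅ := by
      ext x
      simp only [Set.mem_ofPred_eq, Set.mem_empty_iff_false, iff_false, not_le]
      exact hneg.trans_le (norm_nonneg x)
    rw [this] at hM1
    simp at hM1
  -- Markov's inequality for `‖x‖²` at the level `M²`, which is exceeded with probability `≥ 1/2`.
  have hmk := mul_meas_ge_le_integral_of_nonneg (μ := ν)
    (Filter.Eventually.of_forall fun x => sq_nonneg ‖x‖) (integrable_norm_sq hi4) (M ^ 2)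
  have hhalf : (1 / 2 : ℝ) ≤ ν.real {x | M ^ 2 ≤ ‖x‖ ^ 2} := by
    have hset : {x : EuclideanSpace ℝ (Fin n) | M ^ 2 ≤ ‖x‖ ^ 2} = {x | M ≤ ‖x‖} := by
      ext x
      exact pow_le_pow_iff_left₀ hM0 (norm_nonneg x) two_ne_zero
    rw [hset]
    have := ENNReal.toReal_mono (measure_ne_top ν _) hM2
    simpa [Measure.real] using this
  have hM : M ^ 2 ≤ 2 * n := by nlinarith [sq_nonneg M]
  have hM4 : M ^ 4 ≤ 4 * (n : ℝ) ^ 2 := by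
    calc M ^ 4 = (M ^ 2) ^ 2 := by ring
      _ ≤ (2 * (n : ℝ)) ^ 2 := by gcongr
      _ = _ := by ring
  have hn1 : (1 : ℝ) ≤ (n : ℝ) ^ 2 := one_le_pow₀ (by exact_mod_cast hn)
  have := (integral_pow_four_le_of_sub continuous_norm hi hD).2
  nlinarith

theorem ExpConc.integral_inner_pow_four_le (h : ExpConc ν 1 C₀) (hC₀ : 0 < C₀)
    (hmean : ‖∫ x, x ∂ν‖ ≤ 1) (y : EuclideanSpace ℝ (Fin n)) :
    ∫ x, ⟪y, x⟫ ^ 4 ∂ν ≤ 8 * (24 * C₀ + (2 + 24 * C₀) ^ 4) * ‖y‖ ^ 4 := by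
  rcases eq_or_ne y 0 with rfl | hy
  · simp
  have hy' : 0 < ‖y‖ := norm_pos_iff.2 hy
  set u : EuclideanSpace ℝ (Fin n) := ‖y‖⁻¹ • y with hu
  have hu1 : ‖u‖ = 1 := by
    rw [hu, norm_smul, norm_inv, norm_norm, inv_mul_cancel₀ hy'.ne']
  have hyu : y = ‖y‖ • u := by rw [hu, smul_smul, mul_inv_cancel₀ hy'.ne', one_smul]
  have hlip : LipschitzWith 1 fun x : EuclideanSpace ℝ (Fin n) => ⟪u, x⟫ := by
    refine LipschitzWith.of_dist_le_mul fun a b => ?_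
    rw [Real.dist_eq, ← inner_sub_right, dist_eq_norm]
    simpa [hu1] using abs_real_inner_le_norm u (a - b)
  obtain ⟨M, -, -, hi, hD⟩ := h.exists_moment_four hC₀ hlip
  have hi1 := integrable_self (h.integrable_norm_pow_four hC₀)
  have hif : Integrable (fun x => ⟪u, x⟫) ν := hi1.const_inner u
  -- The median is within `1 + 24 C₀` of the mean, and the mean is at most one.
  have hdist : |(∫ x, ⟪u, x⟫ ∂ν) - M| ≤ 1 + 24 * C₀ := by
    have e : (∫ x, ⟪u, x⟫ ∂ν) - M = ∫ x, (⟪u, x⟫ - M) ∂ν := by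
      rw [integral_sub hif (integrable_const _)]; simp
    rw [e]
    calc |∫ x, (⟪u, x⟫ - M) ∂ν| ≤ ∫ x, |⟪u, x⟫ - M| ∂ν := abs_integral_le_integral_abs
      _ ≤ ∫ x, (1 + (⟪u, x⟫ - M) ^ 4) ∂ν := by
        refine integral_mono (hif.sub (integrable_const _)).abs ((integrable_const _).add hi)
          fun x => ?_
        simp only
        generalize ⟪u, x⟫ - M = a
        have h4 : a ^ 4 = |a| ^ 4 := (Even.pow_abs (by decide) _).symm
        rw [h4]
        nlinarith [sq_nonneg (|a| - 1), sq_nonneg (|a| ^ 2 - 1)]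
      _ ≤ 1 + 24 * C₀ := by
        rw [integral_add (integrable_const _) hi]
        simp only [integral_const, probReal_univ, one_smul]
        linarith
  have hmean' : |∫ x, ⟪u, x⟫ ∂ν| ≤ 1 := by
    rw [integral_inner hi1]
    refine (abs_real_inner_le_norm _ _).trans ?_
    rw [hu1, one_mul]; exact hmean
  have hM : |M| ≤ 2 + 24 * C₀ := by
    rw [abs_le] at *
    constructor <;> linarith [hdist.1, hdist.2, hmean'.1, hmean'.2]
  have hM4 : M ^ 4 ≤ (2 + 24 * C₀) ^ 4 := by
    rw [← Even.pow_abs (by decide : Even 4) M]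
    gcongr
  have hfin := (integral_pow_four_le_of_sub hlip.continuous hi hD).2
  have e : ∫ x, ⟪y, x⟫ ^ 4 ∂ν = ‖y‖ ^ 4 * ∫ x, ⟪u, x⟫ ^ 4 ∂ν := by
    rw [← integral_const_mul]
    congr 1
    ext x
    conv_lhs => rw [hyu]
    rw [real_inner_smul_left, mul_pow]
  rw [e, mul_comm]
  gcongr
  linarith

end Moments

/-! ### Integrals of powers of the inner product over a product measure -/

section Product

variable {n : ℕ} {μ ν : Measure (EuclideanSpace ℝ (Fin n))}

theorem integrable_inner_pow_four (hμ : Integrable (fun x => ‖x‖ ^ 4) μ)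
    (hν : Integrable (fun x => ‖x‖ ^ 4) ν) :
    Integrable (fun z : EuclideanSpace ℝ (Fin n) × EuclideanSpace ℝ (Fin n) => ⟪z.1, z.2⟫ ^ 4)
      (μ.prod ν) :=
  continuous_integrable_of_le (hμ.mul_prod hν) (by fun_prop) fun z => by
    rw [abs_pow, ← mul_pow]
    gcongr
    exact abs_real_inner_le_norm _ _

variable [IsProbabilityMeasure μ] [IsProbabilityMeasure ν]

theorem integrable_inner_sq (hμ : Integrable (fun x => ‖x‖ ^ 4) μ)
    (hν : Integrable (fun x => ‖x‖ ^ 4) ν) :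
    Integrable (fun z : EuclideanSpace ℝ (Fin n) × EuclideanSpace ℝ (Fin n) => ⟪z.1, z.2⟫ ^ 2)
      (μ.prod ν) :=
  continuous_integrable_of_le ((integrable_norm_sq hμ).mul_prod (integrable_norm_sq hν))
    (by fun_prop) fun z => by
      rw [abs_pow, ← mul_pow]
      gcongr
      exact abs_real_inner_le_norm _ _

/-- The constant `K` with `∫∫ ⟪x, y⟫⁴ ≤ K n²`. -/
def momentConst (C₀ : ℝ) : ℝ := 8 * (24 * C₀ + (2 + 24 * C₀) ^ 4) * (192 * C₀ + 32)

theorem integral_prod_inner_pow_four_le {C₀ : ℝ} (hC₀ : 0 < C₀) (hn : 1 ≤ n)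
    (hμ : ExpConc μ 1 C₀) (hν : ExpConc ν 1 C₀) (hmean : ‖∫ x, x ∂ν‖ ≤ 1)
    (htr : Matrix.trace (covMat μ) ≤ n) :
    ∫ z, ⟪z.1, z.2⟫ ^ 4 ∂(μ.prod ν) ≤ momentConst C₀ * (n : ℝ) ^ 2 := by
  have h4μ := hμ.integrable_norm_pow_four hC₀
  have h4ν := hν.integrable_norm_pow_four hC₀
  have hi := integrable_inner_pow_four h4μ h4ν
  rw [integral_prod _ hi]
  calc _ ≤ ∫ x, 8 * (24 * C₀ + (2 + 24 * C₀) ^ 4) * ‖x‖ ^ 4 ∂μ :=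
        integral_mono hi.integral_prod_left (h4μ.const_mul _) fun x =>
          hν.integral_inner_pow_four_le hC₀ hmean x
    _ ≤ 8 * (24 * C₀ + (2 + 24 * C₀) ^ 4) * ((192 * C₀ + 32) * (n : ℝ) ^ 2) := by
        rw [integral_const_mul]
        gcongr
        exact hμ.integral_norm_pow_four_le hC₀ hn htr
    _ = _ := by rw [momentConst]; ring

theorem integral_prod_inner_sq_le {K : ℝ} (hn : 1 ≤ n)
    (hμ : Integrable (fun x => ‖x‖ ^ 4) μ) (hν : Integrable (fun x => ‖x‖ ^ 4) ν)
    (hK : ∫ z, ⟪z.1, z.2⟫ ^ 4 ∂(μ.prod ν) ≤ K * (n : ℝ) ^ 2) :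
    ∫ z, ⟪z.1, z.2⟫ ^ 2 ∂(μ.prod ν) ≤ n * (1 + K) / 2 := by
  have hn0 : (0 : ℝ) < n := by exact_mod_cast hn
  have hi := integrable_inner_pow_four hμ hν
  -- The arithmetic-geometric mean inequality `a² ≤ n / 2 + a⁴ / (2n)`.
  calc _ ≤ ∫ z, ((n : ℝ) / 2 + (1 / (2 * n)) * ⟪z.1, z.2⟫ ^ 4) ∂(μ.prod ν) := by
        refine integral_mono (integrable_inner_sq hμ hν)
          ((integrable_const _).add (hi.const_mul _)) fun z => ?_
        simp only
        generalize ⟪z.1, z.2⟫ = a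
        rw [← sub_nonneg]
        have : (n : ℝ) / 2 + 1 / (2 * n) * a ^ 4 - a ^ 2 = (n - a ^ 2) ^ 2 / (2 * n) := by
          field_simp; ring
        rw [this]; positivity
    _ = (n : ℝ) / 2 + (1 / (2 * n)) * ∫ z, ⟪z.1, z.2⟫ ^ 4 ∂(μ.prod ν) := by
        rw [integral_add (integrable_const _) (hi.const_mul _), integral_const_mul]
        simp
    _ ≤ (n : ℝ) / 2 + (1 / (2 * n)) * (K * (n : ℝ) ^ 2) := by gcongr
    _ = _ := by field_simp

theorem integral_prod_inner_sq (hμ : Integrable (fun x => ‖x‖ ^ 4) μ)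
    (hν : Integrable (fun x => ‖x‖ ^ 4) ν) :
    ∫ z, ⟪z.1, z.2⟫ ^ 2 ∂(μ.prod ν) = ∑ i, ∑ j, covMat μ i j * covMat ν i j := by
  have e : ∀ z : EuclideanSpace ℝ (Fin n) × EuclideanSpace ℝ (Fin n),
      ⟪z.1, z.2⟫ ^ 2 = ∑ i, ∑ j, (z.1 i * z.1 j) * (z.2 i * z.2 j) := by
    intro z
    rw [PiLp.inner_apply, sq, Finset.sum_mul_sum]
    refine Finset.sum_congr rfl fun i _ => Finset.sum_congr rfl fun j _ => ?_
    simp only [RCLike.inner_apply, conj_trivial]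
    ring
  simp only [e]
  have hij : ∀ i j : Fin n, Integrable
      (fun z : EuclideanSpace ℝ (Fin n) × EuclideanSpace ℝ (Fin n) =>
        (z.1 i * z.1 j) * (z.2 i * z.2 j)) (μ.prod ν) := fun i j =>
    (integrable_coord_mul hμ i j).mul_prod (integrable_coord_mul hν i j)
  rw [integral_finsetSum _ fun i _ => integrable_finsetSum _ fun j _ => hij i j]
  refine Finset.sum_congr rfl fun i _ => ?_
  rw [integral_finsetSum _ fun j _ => hij i j]
  refine Finset.sum_congr rfl fun j _ => ?_
  exact integral_prod_mul (fun x : EuclideanSpace ℝ (Fin n) => x i * x j)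
    (fun y : EuclideanSpace ℝ (Fin n) => y i * y j)

theorem frobNorm_sub_sq (hμ : Integrable (fun x => ‖x‖ ^ 4) μ)
    (hν : Integrable (fun x => ‖x‖ ^ 4) ν) :
    frobNorm (covMat μ - covMat ν) ^ 2 =
      ∫ z, ⟪z.1, z.2⟫ ^ 2 ∂(μ.prod μ) - 2 * ∫ z, ⟪z.1, z.2⟫ ^ 2 ∂(μ.prod ν)
        + ∫ z, ⟪z.1, z.2⟫ ^ 2 ∂(ν.prod ν) := by
  rw [integral_prod_inner_sq hμ hμ, integral_prod_inner_sq hμ hν, integral_prod_inner_sq hν hν,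
    frobNorm, Real.sq_sqrt (by positivity)]
  simp only [Finset.mul_sum, ← Finset.sum_sub_distrib, ← Finset.sum_add_distrib, Matrix.sub_apply]
  refine Finset.sum_congr rfl fun i _ => Finset.sum_congr rfl fun j _ => ?_
  ring

/-! ### Bounds for the entries of the Gram matrix -/

theorem cos_le_quartic (u : ℝ) : Real.cos u ≤ 1 - u ^ 2 / 2 + u ^ 4 / 2 := by
  have h4 : |u| ^ 4 = u ^ 4 := Even.pow_abs (by decide) _
  have h4' : 0 ≤ u ^ 4 := by positivity
  rcases le_or_gt |u| 1 with h | h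
  · have := (abs_le.1 (Real.cos_bound h)).2
    rw [h4] at this
    linarith
  · have h2 : 1 ≤ u ^ 2 := by rw [← sq_abs]; nlinarith
    nlinarith [Real.cos_le_one u]

theorem integrable_cos_inner (s : ℝ) :
    Integrable (fun z : EuclideanSpace ℝ (Fin n) × EuclideanSpace ℝ (Fin n) =>
      Real.cos (s * ⟪z.1, z.2⟫)) (μ.prod ν) :=
  continuous_integrable_of_le (integrable_const 1) (by fun_prop) fun _ => Real.abs_cos_le_one _

theorem integral_cos_symm (s : ℝ) :
    ∫ x, ∫ y, Real.cos (s * ⟪x, y⟫) ∂μ ∂ν = ∫ x, ∫ y, Real.cos (s * ⟪x, y⟫) ∂ν ∂μ := by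
  rw [integral_integral_swap (f := fun x y => Real.cos (s * ⟪x, y⟫)) (integrable_cos_inner s)]
  simp only [real_inner_comm]

theorem abs_integral_cos_le (s : ℝ) :
    |∫ x, ∫ y, Real.cos (s * ⟪x, y⟫) ∂ν ∂μ| ≤ 1 := by
  rw [← integral_prod _ (integrable_cos_inner s)]
  refine abs_integral_le_integral_abs.trans ?_
  refine (integral_mono (integrable_cos_inner s).abs (integrable_const 1)
    fun z => Real.abs_cos_le_one _).trans ?_
  simp

theorem integral_cos_ge (hμ : Integrable (fun x => ‖x‖ ^ 4) μ)
    (hν : Integrable (fun x => ‖x‖ ^ 4) ν) (s : ℝ) :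
    1 - s ^ 2 / 2 * ∫ z, ⟪z.1, z.2⟫ ^ 2 ∂(μ.prod ν)
      ≤ ∫ x, ∫ y, Real.cos (s * ⟪x, y⟫) ∂ν ∂μ := by
  have h2 := (integrable_inner_sq hμ hν).const_mul (s ^ 2 / 2)
  rw [← integral_prod _ (integrable_cos_inner s), ← integral_const_mul]
  calc _ = ∫ z, (1 - s ^ 2 / 2 * ⟪z.1, z.2⟫ ^ 2) ∂(μ.prod ν) := by
        rw [integral_sub (integrable_const _) h2]; simp
    _ ≤ _ := integral_mono ((integrable_const _).sub h2) (integrable_cos_inner s) fun z => by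
        have := Real.one_sub_sq_div_two_le_cos (x := s * ⟪z.1, z.2⟫)
        simp only
        rw [mul_pow] at this
        linarith

theorem integral_cos_le (hμ : Integrable (fun x => ‖x‖ ^ 4) μ)
    (hν : Integrable (fun x => ‖x‖ ^ 4) ν) (s : ℝ) :
    ∫ x, ∫ y, Real.cos (s * ⟪x, y⟫) ∂ν ∂μ ≤
      1 - s ^ 2 / 2 * ∫ z, ⟪z.1, z.2⟫ ^ 2 ∂(μ.prod ν)
        + s ^ 4 / 2 * ∫ z, ⟪z.1, z.2⟫ ^ 4 ∂(μ.prod ν) := by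
  have h2 := (integrable_inner_sq hμ hν).const_mul (s ^ 2 / 2)
  have h4 := (integrable_inner_pow_four hμ hν).const_mul (s ^ 4 / 2)
  rw [← integral_prod _ (integrable_cos_inner s), ← integral_const_mul, ← integral_const_mul]
  calc _ ≤ ∫ z, ((1 - s ^ 2 / 2 * ⟪z.1, z.2⟫ ^ 2) + s ^ 4 / 2 * ⟪z.1, z.2⟫ ^ 4) ∂(μ.prod ν) :=
        integral_mono (integrable_cos_inner s) (((integrable_const _).sub h2).add h4) fun z => by
          have := cos_le_quartic (s * ⟪z.1, z.2⟫)
          simp only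
          rw [mul_pow, mul_pow] at this
          linarith
    _ = _ := by
        rw [integral_add (f := fun z => 1 - s ^ 2 / 2 * ⟪z.1, z.2⟫ ^ 2)
          ((integrable_const _).sub h2) h4, integral_sub (integrable_const _) h2]
        simp

end Product

/-! ### Singular values of symmetric `2 × 2` matrices -/

/-- For a symmetric matrix with rows `(g, h)`, `(h, k)` and entries in `[-1, 1]`, the smallest
singular value is at least `|det| / 2`, because the adjugate has norm at most two. -/
theorem norm_toEuclideanLin_ge {g h k d : ℝ} (hg : |g| ≤ 1) (hh : |h| ≤ 1) (hk : |k| ≤ 1)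
    (hd0 : 0 ≤ d) (hd : 2 * d ≤ h ^ 2 - g * k) (G : Matrix (Fin 2) (Fin 2) ℝ)
    (h00 : G 0 0 = g) (h01 : G 0 1 = h) (h10 : G 1 0 = h) (h11 : G 1 1 = k)
    (v : EuclideanSpace ℝ (Fin 2)) :
    d * ‖v‖ ≤ ‖Matrix.toEuclideanLin G v‖ := by
  have e0 : Matrix.toEuclideanLin G v 0 = g * v 0 + h * v 1 := by
    simp [Matrix.toLpLin_apply, h00, h01]
  have e1 : Matrix.toEuclideanLin G v 1 = h * v 0 + k * v 1 := by
    simp [Matrix.toLpLin_apply, h10, h11]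
  refine abs_le_of_sq_le_sq' ?_ (norm_nonneg _) |>.2
  rw [mul_pow, EuclideanSpace.norm_sq_eq, EuclideanSpace.norm_sq_eq, Fin.sum_univ_two,
    Fin.sum_univ_two]
  simp only [Real.norm_eq_abs, sq_abs, e0, e1]
  generalize v 0 = a
  generalize v 1 = b
  have hg2 : g ^ 2 ≤ 1 := (sq_le_one_iff_abs_le_one g).2 hg
  have hh2 : h ^ 2 ≤ 1 := (sq_le_one_iff_abs_le_one h).2 hh
  have hk2 : k ^ 2 ≤ 1 := (sq_le_one_iff_abs_le_one k).2 hk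
  set p := g * a + h * b with hp
  set q := h * a + k * b with hq
  have hdet : (2 * d) ^ 2 ≤ (h ^ 2 - g * k) ^ 2 := by gcongr
  have ha : (h ^ 2 - g * k) * a = h * q - k * p := by rw [hp, hq]; ring
  have hb : (h ^ 2 - g * k) * b = h * p - g * q := by rw [hp, hq]; ring
  have h1 : (h * q - k * p) ^ 2 ≤ 2 * (q ^ 2 + p ^ 2) := by
    nlinarith [sq_nonneg (h * q + k * p), mul_le_mul_of_nonneg_right hh2 (sq_nonneg q),
      mul_le_mul_of_nonneg_right hk2 (sq_nonneg p)]
  have h2 : (h * p - g * q) ^ 2 ≤ 2 * (p ^ 2 + q ^ 2) := by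
    nlinarith [sq_nonneg (h * p + g * q), mul_le_mul_of_nonneg_right hh2 (sq_nonneg p),
      mul_le_mul_of_nonneg_right hg2 (sq_nonneg q)]
  have h3 : (2 * d) ^ 2 * (a ^ 2 + b ^ 2) ≤ (h ^ 2 - g * k) ^ 2 * (a ^ 2 + b ^ 2) := by gcongr
  have h4 : (h ^ 2 - g * k) ^ 2 * (a ^ 2 + b ^ 2)
      = (h * q - k * p) ^ 2 + (h * p - g * q) ^ 2 := by rw [← ha, ← hb]; ring
  nlinarith

/-- If the off-diagonal entry exceeds the average of the diagonal entries, which are at least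
`1 / 2`, by at least `2 d`, then the determinant is at most `-2 d`. -/
theorem two_mul_le_neg_det {g h k d : ℝ} (hg : 1 / 2 ≤ g) (hk : 1 / 2 ≤ k) (hd : 0 ≤ d)
    (hh : g + k - 2 * h ≤ -(4 * d)) : 2 * d ≤ h ^ 2 - g * k := by
  have h1 : ((g + k) / 2 + 2 * d) ^ 2 ≤ h ^ 2 := by gcongr; linarith
  nlinarith [sq_nonneg (g - k), mul_nonneg (by linarith : 0 ≤ g + k - 1) hd, sq_nonneg d]

/-- **Lemma: lower bound for the smallest singular value of the `2×2` Gram matrix of the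
oscillating kernel in terms of the angular separation of the covariance matrices.** -/
theorem cos_kernel_gram_matrix_smallest_singular_value
    (C₀ : ℝ) (hC₀ : 0 < C₀) :
    ∃ c₁ c₂ : ℝ, 0 < c₁ ∧ 0 < c₂ ∧
      ∀ (n : ℕ), 1 ≤ n →
      ∀ μ₁ μ₂ : Measure (EuclideanSpace ℝ (Fin n)),
        IsProbabilityMeasure μ₁ → IsProbabilityMeasure μ₂ →
        ExpConc μ₁ 1 C₀ → ExpConc μ₂ 1 C₀ →
        ‖∫ x, x ∂μ₁‖ ≤ 1 → ‖∫ x, x ∂μ₂‖ ≤ 1 →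
        Matrix.trace (covMat μ₁) ≤ n → Matrix.trace (covMat μ₂) ≤ n →
      ∀ t : ℝ, 0 < t → t ≤ c₁ * frobNorm (covMat μ₁ - covMat μ₂) / Real.sqrt n →
        ∀ v : EuclideanSpace ℝ (Fin 2),
          c₂ * t ^ 2 * frobNorm (covMat μ₁ - covMat μ₂) ^ 2 / n * ‖v‖
            ≤ ‖Matrix.toEuclideanLin
                (Matrix.of fun i j : Fin 2 =>
                  ∫ x, ∫ y, Real.cos ((t / Real.sqrt n) * ⟪x, y⟫)
                    ∂((![μ₁, μ₂]) j) ∂((![μ₁, μ₂]) i)) v‖ := by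
  set K := momentConst C₀ with hKdef
  have hK : 0 < K := by rw [hKdef, momentConst]; positivity
  refine ⟨1 / (2 * (1 + K)), 1 / 16, by positivity, by norm_num, ?_⟩
  intro n hn μ₁ μ₂ hp₁ hp₂ hc₁ hc₂ hm₁ hm₂ ht₁ ht₂ t ht htle v
  have hn0 : (0 : ℝ) < n := by exact_mod_cast hn
  have hi₁ := hc₁.integrable_norm_pow_four hC₀
  have hi₂ := hc₂.integrable_norm_pow_four hC₀
  have hB₁₁ := integral_prod_inner_pow_four_le hC₀ hn hc₁ hc₁ hm₁ ht₁
  have hB₂₂ := integral_prod_inner_pow_four_le hC₀ hn hc₂ hc₂ hm₂ ht₂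
  have hA₁₁ := integral_prod_inner_sq_le hn hi₁ hi₁ hB₁₁
  have hA₂₂ := integral_prod_inner_sq_le hn hi₂ hi₂ hB₂₂
  have hA₁₂ : 0 ≤ ∫ z, ⟪z.1, z.2⟫ ^ 2 ∂(μ₁.prod μ₂) := integral_nonneg fun z => sq_nonneg _
  have hΔ := frobNorm_sub_sq hi₁ hi₂
  have hΔ0 : 0 ≤ frobNorm (covMat μ₁ - covMat μ₂) := Real.sqrt_nonneg _
  rw [← hKdef] at hB₁₁ hB₂₂ hA₁₁ hA₂₂
  have hs2 : (t / Real.sqrt n) ^ 2 = t ^ 2 / n := by rw [div_pow, Real.sq_sqrt hn0.le]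
  have hs4 : (t / Real.sqrt n) ^ 4 = t ^ 4 / n ^ 2 := by
    rw [show (t / Real.sqrt n) ^ 4 = ((t / Real.sqrt n) ^ 2) ^ 2 by ring, hs2]; ring
  have hg1 := integral_cos_ge hi₁ hi₁ (t / Real.sqrt n)
  have hk1 := integral_cos_ge hi₂ hi₂ (t / Real.sqrt n)
  have hh1 := integral_cos_ge hi₁ hi₂ (t / Real.sqrt n)
  have hg2 := integral_cos_le hi₁ hi₁ (t / Real.sqrt n)
  have hk2 := integral_cos_le hi₂ hi₂ (t / Real.sqrt n)
  rw [hs2] at hg1 hk1 hh1 hg2 hk2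
  rw [hs4] at hg2 hk2
  have habs₁ := abs_integral_cos_le (μ := μ₁) (ν := μ₁) (t / Real.sqrt n)
  have habs₂ := abs_integral_cos_le (μ := μ₂) (ν := μ₂) (t / Real.sqrt n)
  have habs₁₂ := abs_integral_cos_le (μ := μ₁) (ν := μ₂) (t / Real.sqrt n)
  have hsymm := integral_cos_symm (μ := μ₁) (ν := μ₂) (t / Real.sqrt n)
  set Δ := frobNorm (covMat μ₁ - covMat μ₂) with hΔdef
  set A₁₁ := ∫ z, ⟪z.1, z.2⟫ ^ 2 ∂(μ₁.prod μ₁)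
  set A₂₂ := ∫ z, ⟪z.1, z.2⟫ ^ 2 ∂(μ₂.prod μ₂)
  set A₁₂ := ∫ z, ⟪z.1, z.2⟫ ^ 2 ∂(μ₁.prod μ₂)
  set B₁₁ := ∫ z, ⟪z.1, z.2⟫ ^ 4 ∂(μ₁.prod μ₁)
  set B₂₂ := ∫ z, ⟪z.1, z.2⟫ ^ 4 ∂(μ₂.prod μ₂)
  have ht2 : t ^ 2 ≤ 1 / (4 * (1 + K) ^ 2) * (Δ ^ 2 / n) := by
    calc t ^ 2 ≤ (1 / (2 * (1 + K)) * Δ / Real.sqrt n) ^ 2 := by gcongr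
      _ = _ := by rw [div_pow, Real.sq_sqrt hn0.le]; field_simp; ring
  have hΔn : Δ ^ 2 / n ≤ 1 + K := by
    rw [div_le_iff₀ hn0]; linarith
  have ht2' : t ^ 2 * (1 + K) ≤ 1 / 4 := by
    calc t ^ 2 * (1 + K) ≤ 1 / (4 * (1 + K) ^ 2) * (1 + K) * (1 + K) := by
          gcongr
          exact ht2.trans (by gcongr)
      _ = 1 / 4 := by field_simp
  -- The diagonal entries are at least `1 / 2`.
  have hquad : ∀ A : ℝ, A ≤ n * (1 + K) / 2 → t ^ 2 / n / 2 * A ≤ 1 / 2 := by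
    intro A hA
    calc t ^ 2 / n / 2 * A ≤ t ^ 2 / n / 2 * (n * (1 + K) / 2) := by gcongr
      _ = t ^ 2 * (1 + K) / 4 := by field_simp; ring
      _ ≤ 1 / 2 := by linarith
  have hghalf := hquad A₁₁ hA₁₁
  have hkhalf := hquad A₂₂ hA₂₂
  -- The quartic remainder is absorbed by half of the quadratic term.
  have hquart : ∀ B : ℝ, B ≤ K * (n : ℝ) ^ 2 →
      t ^ 4 / (n : ℝ) ^ 2 / 2 * B ≤ t ^ 2 * Δ ^ 2 / n / 8 := by
    intro B hB
    have hKq : K * (1 / (4 * (1 + K) ^ 2)) ≤ 1 / 4 := by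
      rw [mul_one_div, div_le_div_iff₀ (by positivity) (by norm_num)]
      nlinarith
    calc t ^ 4 / (n : ℝ) ^ 2 / 2 * B ≤ t ^ 4 / (n : ℝ) ^ 2 / 2 * (K * (n : ℝ) ^ 2) := by gcongr
      _ = t ^ 2 / 2 * K * t ^ 2 := by field_simp
      _ ≤ t ^ 2 / 2 * K * (1 / (4 * (1 + K) ^ 2) * (Δ ^ 2 / n)) := by gcongr
      _ = t ^ 2 / 2 * (Δ ^ 2 / n) * (K * (1 / (4 * (1 + K) ^ 2))) := by ring
      _ ≤ t ^ 2 / 2 * (Δ ^ 2 / n) * (1 / 4) := by gcongr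
      _ = _ := by ring
  have hq1 := hquart B₁₁ hB₁₁
  have hq2 := hquart B₂₂ hB₂₂
  have hmain : t ^ 2 / n / 2 * A₁₁ + t ^ 2 / n / 2 * A₂₂ - 2 * (t ^ 2 / n / 2 * A₁₂)
      = t ^ 2 * Δ ^ 2 / n / 2 := by rw [hΔ]; ring
  have hd0 : 0 ≤ 1 / 16 * t ^ 2 * Δ ^ 2 / n := by positivity
  refine norm_toEuclideanLin_ge habs₁ habs₁₂ habs₂ hd0
    (two_mul_le_neg_det (by linarith) (by linarith) hd0 ?_) _ rfl rfl hsymm rfl v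
  have e : 4 * (1 / 16 * t ^ 2 * Δ ^ 2 / n) = t ^ 2 * Δ ^ 2 / n / 4 := by ring
  rw [e]
  linarith

end
end
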